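/- Let p and q be distinct primes and let S be a UFIM over C_{pq}∖{0} with k(S) = K_1(C_{pq}) = 2. Then no element of S has order pq; consequently S decomposes as a disjoint union S = S_p ⊔ S_q, where S_p is a UFIM over (the unique subgroup of C_{pq} of order p)∖{0} and S_q is a UFIM over (the unique subgroup of C_{pq} of order q)∖{0}. Moreover S contains exactly p elements of order p and exactly q elements of order q. -/

import Mathlib

open Finset

/-- `S(I)` is minimal zero-sum: nonempty, zero-sum, and no proper nonempty
subfamily is zero-sum. -/
def IsMinZeroSum {G : Type*} [AddCommGroup G] {ℓ : ℕ} (g : Fin ℓ → G)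
    (I : Finset (Fin ℓ)) : Prop :=
  I.Nonempty ∧ ∑ i ∈ I, g i = 0 ∧ ∀ J ⊂ I, J.Nonempty → ∑ i ∈ J, g i ≠ 0

/-- `P` is an irreducible factorization of the indexed multiset `g`: a partition
of the index set all of whose parts are minimal zero-sum. -/
def IsFactorization {G : Type*} [AddCommGroup G] {ℓ : ℕ} (g : Fin ℓ → G)
    (P : Finpartition (Finset.univ : Finset (Fin ℓ))) : Prop :=
  ∀ I ∈ P.parts, IsMinZeroSum g I

/-- `g` is a unique factorization indexed multiset (UFIM) over `G∖{0}`: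
all elements are nonzero and there is exactly one irreducible factorization. -/
def IsUFIM {G : Type*} [AddCommGroup G] {ℓ : ℕ} (g : Fin ℓ → G) : Prop :=
  (∀ i, g i ≠ 0) ∧
  ∃! P : Finpartition (Finset.univ : Finset (Fin ℓ)), IsFactorization g P

/-- The cross number `k(S) = ∑ 1/ord(g_i)`. -/
noncomputable def crossNum {G : Type*} [AddCommGroup G] {ℓ : ℕ} (g : Fin ℓ → G) : ℝ :=
  ∑ i, (1 : ℝ) / (addOrderOf (g i) : ℝ)

/-- `K₁(G)`: the maximal cross number of a UFIM over `G∖{0}`. -/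
noncomputable def K1 (G : Type*) [AddCommGroup G] : ℝ :=
  sSup {x : ℝ | ∃ (ℓ : ℕ) (g : Fin ℓ → G), IsUFIM g ∧ crossNum g = x}

/-- `N₁(G)`: the maximal length of a UFIM over `G∖{0}`. -/
noncomputable def N1 (G : Type*) [AddCommGroup G] : ℕ :=
  sSup {n : ℕ | ∃ g : Fin n → G, IsUFIM g}

/-- `K(G)`: the maximal cross number of a minimal zero-sum indexed multiset over `G∖{0}`. -/
noncomputable def Kcross (G : Type*) [AddCommGroup G] : ℝ :=
  sSup {x : ℝ | ∃ (ℓ : ℕ) (g : Fin ℓ → G), (∀ i, g i ≠ 0) ∧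
    IsMinZeroSum g Finset.univ ∧ crossNum g = x}

/-- `g` is zero-sum free: no nonempty subfamily is zero-sum. -/
def IsZeroSumFree {G : Type*} [AddCommGroup G] {ℓ : ℕ} (g : Fin ℓ → G) : Prop :=
  ∀ I : Finset (Fin ℓ), I.Nonempty → ∑ i ∈ I, g i ≠ 0

/-- The little cross number `k(G)`: the maximal cross number of a zero-sum free
indexed multiset over `G∖{0}`. -/
noncomputable def littleCross (G : Type*) [AddCommGroup G] : ℝ :=
  sSup {x : ℝ | ∃ (ℓ : ℕ) (g : Fin ℓ → G), (∀ i, g i ≠ 0) ∧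
    IsZeroSumFree g ∧ crossNum g = x}

/-!
A zero-sum family of nonzero elements factors uniquely iff its zero-sum subfamilies are closed
under intersection, and this condition is inherited by arbitrary subfamilies. If a zero-sum
subfamily is removed from such a family, a subsum of the remainder and a subsum of the removed part
cancel only when both vanish. Hence splitting off minimal zero-sum subfamilies one at a time and
adding up the sets of partial sums of their elements, all the sums being distinct, shows that the
family has at most as many members as the group has elements (Narkiewicz).

In `M × N`, extract disjoint minimal subfamilies with sum in `M ∖ {0}` from the members outside
`0 × N`. Their sums again satisfy the intersection condition, so there are at most `|M|` of them,
and the second coordinates do so inside each of them and on what is left over. Let the weight of a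
member be the product of the weights of its coordinates, `|M|` or `|N|` if they vanish and `1`
otherwise. Then each extracted subfamily has weight at most `|N|`, and the family has total weight
at most `2 |M| |N|`. For `|M|` and `|N|` distinct primes this weight is `|M| |N|` times the cross
number. Equality forces exactly `|N|` members in `N` and, by symmetry, exactly `|M|` members in `M`;
these already have the full weight, so there are no others.
-/

section Subsums

variable {ι G H : Type*} [AddCommGroup G] [AddCommGroup H]

/-- The sums of the subfamilies of `g` indexed by the subsets of `s`. -/
def subsums (g : ι → G) (s : Finset ι) : Set G :=
  {x | ∃ I ⊆ s, ∑ i ∈ I, g i = x}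

/-- Any two elements of `P` differ, in one of the two orders, by a subsum of `g` over `s`. -/
def IsSubsumChain (g : ι → G) (s : Finset ι) (P : Finset G) : Prop :=
  ∀ ⦃x⦄, x ∈ P → ∀ ⦃y⦄, y ∈ P → y - x ∈ subsums g s ∨ x - y ∈ subsums g s

lemma sum_mem_subsums {g : ι → G} {s I : Finset ι} (hI : I ⊆ s) : ∑ i ∈ I, g i ∈ subsums g s :=
  ⟨I, hI, rfl⟩

lemma one_lt_card_of_sum_eq_zero {g : ι → G} {I : Finset ι} (hI : I.Nonempty)
    (hg0 : ∀ i ∈ I, g i ≠ 0) (hsum : ∑ i ∈ I, g i = 0) : 1 < #I := by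
  refine one_lt_card_iff_nontrivial.2 (hI.exists_eq_singleton_or_nontrivial.resolve_left ?_)
  rintro ⟨a, rfl⟩
  exact hg0 a (mem_singleton_self a) (by simpa using hsum)

lemma neg_mem_subsums {g : ι → G} {I : Finset ι} {x : G} (hI : ∑ i ∈ I, g i = 0)
    (hx : x ∈ subsums g I) : -x ∈ subsums g I := by
  classical
  obtain ⟨K, hK, rfl⟩ := hx
  have hneg : -∑ i ∈ K, g i = ∑ i ∈ I \ K, g i := by rw [sum_sdiff_eq_sub hK, hI, zero_sub]
  exact hneg ▸ sum_mem_subsums sdiff_subset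

lemma exists_isChain_subset_card_eq (s : Finset ι) :
    ∃ 𝓒 : Finset (Finset ι), #𝓒 = #s + 1 ∧ (∀ I ∈ 𝓒, I ⊆ s) ∧
      IsChain (· ⊆ ·) (𝓒 : Set (Finset ι)) := by
  classical
  induction s using Finset.induction with
  | empty => exact ⟨{∅}, by simp⟩
  | insert a s ha ih =>
    obtain ⟨𝓒, hcard, hsub, hchain⟩ := ih
    have hnot : insert a s ∉ 𝓒 := fun h ↦ ha (hsub _ h (mem_insert_self a s))
    have hsub' : ∀ I ∈ 𝓒, I ⊆ insert a s := fun I hI ↦ (hsub I hI).trans (subset_insert a s)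
    refine ⟨insert (insert a s) 𝓒, ?_, ?_, ?_⟩
    · rw [card_insert_of_notMem hnot, hcard, card_insert_of_notMem ha]
    · simpa using hsub'
    · rw [coe_insert]
      exact hchain.insert fun I hI _ ↦ .inr (hsub' I hI)

lemma exists_isSubsumChain_of_zeroSumFree {g : ι → G} {s : Finset ι}
    (hs : ∀ I ⊆ s, ∑ i ∈ I, g i = 0 → I = ∅) :
    ∃ P : Finset G, #P = #s + 1 ∧ IsSubsumChain g s P := by
  classical
  obtain ⟨𝓒, hcard, hsub, hchain⟩ := exists_isChain_subset_card_eq s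
  have hinj_of_subset {I J : Finset ι} (hJ : J ∈ 𝓒) (hIJ : I ⊆ J)
      (h : ∑ i ∈ I, g i = ∑ i ∈ J, g i) : I = J := by
    refine hIJ.antisymm (sdiff_eq_empty_iff_subset.1 (hs _ (sdiff_subset.trans (hsub J hJ)) ?_))
    rw [sum_sdiff_eq_sub hIJ, h, sub_self]
  have hinj : Set.InjOn (fun I ↦ ∑ i ∈ I, g i) (𝓒 : Set (Finset ι)) := fun I hI J hJ h ↦
    (hchain.total hI hJ).elim (hinj_of_subset hJ · h) fun hJI ↦ (hinj_of_subset hI hJI h.symm).symm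
  have hmem {I J : Finset ι} (hJ : J ∈ 𝓒) (hIJ : I ⊆ J) :
      ∑ i ∈ J, g i - ∑ i ∈ I, g i ∈ subsums g s :=
    sum_sdiff_eq_sub (f := g) hIJ ▸ sum_mem_subsums (sdiff_subset.trans (hsub J hJ))
  refine ⟨𝓒.image fun I ↦ ∑ i ∈ I, g i, by rw [card_image_of_injOn hinj, hcard], ?_⟩
  intro _ hx _ hy
  obtain ⟨I, hI, rfl⟩ := mem_image.1 hx
  obtain ⟨J, hJ, rfl⟩ := mem_image.1 hy
  exact (hchain.total hI hJ).imp (hmem hJ) (hmem hI)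

lemma exists_sub_mem_subsums_of_minimal {g : ι → G} {I : Finset ι}
    (hI : Minimal (fun I ↦ I.Nonempty ∧ ∑ i ∈ I, g i = 0) I) :
    ∃ P : Finset G, #P = #I ∧ ∀ x ∈ P, ∀ y ∈ P, y - x ∈ subsums g I := by
  classical
  obtain ⟨⟨⟨a, ha⟩, hsum⟩, hmin⟩ := hI
  have hfree : ∀ J ⊆ I.erase a, ∑ i ∈ J, g i = 0 → J = ∅ := fun J hJ hJ0 ↦
    not_nonempty_iff_eq_empty.1 fun hne ↦
      notMem_erase a I (hJ (hmin ⟨hne, hJ0⟩ (hJ.trans (erase_subset a I)) ha))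
  obtain ⟨P, hcard, hchain⟩ := exists_isSubsumChain_of_zeroSumFree hfree
  have hmono {x : G} : x ∈ subsums g (I.erase a) → x ∈ subsums g I := fun ⟨J, hJ, hx⟩ ↦
    ⟨J, hJ.trans (erase_subset a I), hx⟩
  refine ⟨P, by rw [hcard, card_erase_add_one ha], fun x hx y hy ↦ ?_⟩
  obtain h | h := hchain hx hy
  · exact hmono h
  · exact neg_sub x y ▸ neg_mem_subsums hsum (hmono h)

variable [DecidableEq ι]

/-- The zero-sum subfamilies of `g` inside `s` are closed under intersection. For a zero-sum family
of nonzero elements this is unique factorization, see `isUFIM_iff`; unlike the latter it passes to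
arbitrary subfamilies. -/
def ZeroSumInterClosed (g : ι → G) (s : Finset ι) : Prop :=
  ∀ ⦃I⦄, I ⊆ s → ∀ ⦃J⦄, J ⊆ s → ∑ i ∈ I, g i = 0 → ∑ i ∈ J, g i = 0 → ∑ i ∈ I ∩ J, g i = 0

lemma ZeroSumInterClosed.mono {g : ι → G} {s t : Finset ι} (hg : ZeroSumInterClosed g t)
    (hst : s ⊆ t) : ZeroSumInterClosed g s :=
  fun _ hI _ hJ ↦ hg (hI.trans hst) (hJ.trans hst)

lemma zeroSumInterClosed_congr {g : ι → G} {h : ι → H} {s : Finset ι}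
    (hgh : ∀ I ⊆ s, ∑ i ∈ I, g i = 0 ↔ ∑ i ∈ I, h i = 0) :
    ZeroSumInterClosed g s ↔ ZeroSumInterClosed h s :=
  forall₄_congr fun I hI J hJ ↦ by
    rw [hgh I hI, hgh J hJ, hgh (I ∩ J) (inter_subset_left.trans hI)]

lemma zeroSumInterClosed_comp_iff {F : Type*} [FunLike F G H] [AddMonoidHomClass F G H] (f : F)
    {g : ι → G} {s : Finset ι} (hf : Function.Injective f) :
    ZeroSumInterClosed (f ∘ g) s ↔ ZeroSumInterClosed g s :=
  zeroSumInterClosed_congr fun I _ ↦ by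
    simp only [Function.comp_apply, ← map_sum, map_eq_zero_iff f hf]

lemma ZeroSumInterClosed.sum_of_pairwiseDisjoint {g : ι → G} {s : Finset ι}
    (hg : ZeroSumInterClosed g s) {T : Finset (Finset ι)} (hTs : ∀ X ∈ T, X ⊆ s)
    (hT : (T : Set (Finset ι)).PairwiseDisjoint id) :
    ZeroSumInterClosed (fun X ↦ ∑ i ∈ X, g i) T := by
  have hsum : ∀ U ⊆ T, ∑ X ∈ U, ∑ i ∈ X, g i = ∑ i ∈ U.biUnion id, g i :=
    fun U hU ↦ (sum_biUnion (hT.subset (coe_subset.2 hU))).symm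
  have hsub : ∀ U ⊆ T, U.biUnion id ⊆ s := fun U hU ↦ biUnion_subset.2 fun X hX ↦ hTs X (hU hX)
  intro U hU V hV hU0 hV0
  rw [hsum U hU] at hU0
  rw [hsum V hV] at hV0
  rw [hsum _ (inter_subset_left.trans hU), ← hg (hsub U hU) (hsub V hV) hU0 hV0]
  congr 1
  ext i
  simp only [mem_biUnion, mem_inter, id]
  refine ⟨fun ⟨X, ⟨hXU, hXV⟩, hi⟩ ↦ ⟨⟨X, hXU, hi⟩, X, hXV, hi⟩, ?_⟩
  rintro ⟨⟨X, hXU, hiX⟩, Y, hYV, hiY⟩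
  obtain rfl := hT.elim_finset (hU hXU) (hV hYV) i hiX hiY
  exact ⟨X, ⟨hXU, hYV⟩, hiX⟩

lemma ZeroSumInterClosed.eq_zero_of_add_eq_zero {g : ι → G} {s I : Finset ι} {x y : G}
    (hg : ZeroSumInterClosed g s) (hIs : I ⊆ s) (hI : ∑ i ∈ I, g i = 0)
    (hx : x ∈ subsums g (s \ I)) (hy : y ∈ subsums g I) (hxy : x + y = 0) : y = 0 := by
  obtain ⟨K, hK, rfl⟩ := hx
  obtain ⟨L, hL, rfl⟩ := hy
  have hKI : Disjoint K I := disjoint_of_subset_left hK sdiff_disjoint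
  have hKL : Disjoint K L := disjoint_of_subset_right hL hKI
  rw [← sum_union hKL] at hxy
  have hinter := hg (union_subset (hK.trans sdiff_subset) (hL.trans hIs)) hIs hxy hI
  rwa [union_inter_distrib_right, disjoint_iff_inter_eq_empty.1 hKI, empty_union,
    inter_eq_left.2 hL] at hinter

lemma add_mem_subsums {g : ι → G} {s I : Finset ι} {x y : G} (hIs : I ⊆ s)
    (hx : x ∈ subsums g (s \ I)) (hy : y ∈ subsums g I) : x + y ∈ subsums g s := by
  obtain ⟨K, hK, rfl⟩ := hx
  obtain ⟨L, hL, rfl⟩ := hy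
  rw [← sum_union (disjoint_of_subset_left hK (disjoint_of_subset_right hL sdiff_disjoint))]
  exact sum_mem_subsums (union_subset (hK.trans sdiff_subset) (hL.trans hIs))

open scoped Pointwise

lemma IsSubsumChain.add [DecidableEq G] {g : ι → G} {s I : Finset ι} {P Q : Finset G}
    (hQ : IsSubsumChain g (s \ I) Q) (hIs : I ⊆ s)
    (hP : ∀ x ∈ P, ∀ y ∈ P, y - x ∈ subsums g I) : IsSubsumChain g s (Q + P) := by
  intro _ hsum _ hsum'
  obtain ⟨x, hx, x', hx', rfl⟩ := mem_add.1 hsum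
  obtain ⟨y, hy, y', hy', rfl⟩ := mem_add.1 hsum'
  rw [add_sub_add_comm, add_sub_add_comm]
  exact (hQ hx hy).imp (add_mem_subsums hIs · (hP x' hx' y' hy'))
    (add_mem_subsums hIs · (hP y' hy' x' hx'))

lemma ZeroSumInterClosed.card_add [DecidableEq G] {g : ι → G} {s I : Finset ι} {P Q : Finset G}
    (hg : ZeroSumInterClosed g s) (hIs : I ⊆ s) (hI : ∑ i ∈ I, g i = 0)
    (hQ : IsSubsumChain g (s \ I) Q) (hP : ∀ x ∈ P, ∀ y ∈ P, y - x ∈ subsums g I) :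
    #(Q + P) = #Q * #P := by
  refine card_add_iff.2 ?_
  rintro ⟨x, x'⟩ hx ⟨y, y'⟩ hy (hxy : x + x' = y + y')
  obtain ⟨hx, hx'⟩ := hx
  obtain ⟨hy, hy'⟩ := hy
  suffices x' = y' from Prod.ext (add_right_cancel (this ▸ hxy)) this
  obtain h | h := hQ hx hy
  · refine (sub_eq_zero.1 (hg.eq_zero_of_add_eq_zero hIs hI h (hP x' hx' y' hy') ?_)).symm
    rw [← add_sub_add_comm, hxy, sub_self]
  · refine sub_eq_zero.1 (hg.eq_zero_of_add_eq_zero hIs hI h (hP y' hy' x' hx') ?_)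
    rw [← add_sub_add_comm, hxy, sub_self]

lemma ZeroSumInterClosed.exists_isSubsumChain {g : ι → G} {s : Finset ι}
    (hg : ZeroSumInterClosed g s) (hg0 : ∀ i ∈ s, g i ≠ 0) (hs : s.Nonempty) :
    ∃ P : Finset G, #s ≤ #P ∧ 1 < #P ∧ IsSubsumChain g s P := by
  classical
  induction s using Finset.strongInduction with | H s ih =>
  by_cases hfree : ∀ I ⊆ s, ∑ i ∈ I, g i = 0 → I = ∅
  · obtain ⟨P, hcard, hchain⟩ := exists_isSubsumChain_of_zeroSumFree hfree
    have hpos := hs.card_pos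
    exact ⟨P, by omega, by omega, hchain⟩
  push Not at hfree
  obtain ⟨J, hJs, hJ0, hJ⟩ := hfree
  obtain ⟨I, hIJ, hI⟩ := exists_minimal_le_of_wellFoundedLT
    (fun I ↦ I.Nonempty ∧ ∑ i ∈ I, g i = 0) J ⟨hJ, hJ0⟩
  have hIs : I ⊆ s := hIJ.trans hJs
  have hI2 := one_lt_card_of_sum_eq_zero hI.prop.1 (fun i hi ↦ hg0 i (hIs hi)) hI.prop.2
  obtain ⟨P, hPcard, hP⟩ := exists_sub_mem_subsums_of_minimal hI
  obtain hsI | hsI := (s \ I).eq_empty_or_nonempty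
  · obtain rfl := (sdiff_eq_empty_iff_subset.1 hsI).antisymm hIs
    exact ⟨P, hPcard.ge, hPcard ▸ hI2, fun x hx y hy ↦ .inl (hP x hx y hy)⟩
  · obtain ⟨Q, hsQ, hQ2, hQ⟩ := ih _ (sdiff_ssubset hIs hI.prop.1) (hg.mono sdiff_subset)
      (fun i hi ↦ hg0 i (sdiff_subset hi)) hsI
    have hcard := hg.card_add hIs hI.prop.2 hQ hP
    have hsplit := card_sdiff_add_card_eq_card hIs
    exact ⟨Q + P, by nlinarith, by nlinarith, hQ.add hIs hP⟩

lemma ZeroSumInterClosed.card_le_natCard [Finite G] {g : ι → G} {s : Finset ι}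
    (hg : ZeroSumInterClosed g s) (hg0 : ∀ i ∈ s, g i ≠ 0) : #s ≤ Nat.card G := by
  obtain rfl | hs := s.eq_empty_or_nonempty
  · simp
  · obtain ⟨P, hsP, -⟩ := hg.exists_isSubsumChain hg0 hs
    exact hsP.trans (Set.ncard_coe_finset P ▸ Set.ncard_le_card _)

end Subsums

section PairwiseDisjoint

variable {ι : Type*} [DecidableEq ι] {T : Finset (Finset ι)} {X : Finset ι}

lemma notMem_of_disjoint_biUnion (hX : X.Nonempty) (hXT : Disjoint X (T.biUnion id)) : X ∉ T :=
  fun h ↦ hX.ne_empty (disjoint_self.1 ((disjoint_biUnion_right ..).1 hXT X h))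

lemma pairwiseDisjoint_insert_of_disjoint_biUnion (hT : (T : Set (Finset ι)).PairwiseDisjoint id)
    (hXT : Disjoint X (T.biUnion id)) :
    (insert X T : Set (Finset ι)).PairwiseDisjoint id :=
  hT.insert fun Y hY _ ↦ (disjoint_biUnion_right ..).1 hXT Y hY

lemma exists_pairwiseDisjoint_minimal {P : Finset ι → Prop} (hP : ¬P ∅) (D : Finset ι) :
    ∃ T : Finset (Finset ι), (∀ X ∈ T, X ⊆ D ∧ Minimal P X) ∧
      (T : Set (Finset ι)).PairwiseDisjoint id ∧ ∀ X ⊆ D \ T.biUnion id, ¬P X := by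
  classical
  let 𝓣 : Finset (Finset (Finset ι)) := {T ∈ D.powerset.powerset |
    (∀ X ∈ T, Minimal P X) ∧ (T : Set (Finset ι)).PairwiseDisjoint id}
  have h𝓣 {U : Finset (Finset ι)} : U ∈ 𝓣 ↔ (∀ X ∈ U, X ⊆ D ∧ Minimal P X) ∧
      (U : Set (Finset ι)).PairwiseDisjoint id := by
    simp [𝓣, subset_iff (s₁ := U), forall_and, and_assoc]
  obtain ⟨T, hT⟩ := 𝓣.exists_maximal ⟨∅, by simp [𝓣]⟩
  obtain ⟨hTD, hTdisj⟩ := h𝓣.1 hT.prop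
  refine ⟨T, hTD, hTdisj, fun X hX hPX ↦ ?_⟩
  obtain ⟨Y, hYX, hY⟩ := exists_minimal_le_of_wellFoundedLT P X hPX
  obtain ⟨hYD, hYT⟩ := subset_sdiff.1 (hYX.trans hX)
  have hmem : insert Y T ∈ 𝓣 := h𝓣.2 ⟨(forall_mem_insert ..).2 ⟨⟨hYD, hY⟩, hTD⟩,
    coe_insert Y T ▸ pairwiseDisjoint_insert_of_disjoint_biUnion hTdisj hYT⟩
  have hYne : Y.Nonempty := nonempty_iff_ne_empty.2 fun h ↦ hP (h ▸ hY.prop)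
  exact notMem_of_disjoint_biUnion hYne hYT
    (hT.le_of_ge hmem (subset_insert Y T) (mem_insert_self Y T))

end PairwiseDisjoint

section Prod

variable {ι M N : Type*} [AddCommGroup M] [AddCommGroup N]

/-- The subfamily of `g` indexed by `X` has a nonzero sum in the factor `M` of `M × N`. -/
def SumsToFst (g : ι → M × N) (X : Finset ι) : Prop :=
  ∑ i ∈ X, (g i).1 ≠ 0 ∧ ∑ i ∈ X, (g i).2 = 0

open scoped Classical in
/-- The multiple of the cross number contributed by one coordinate of an element: in a group of
prime order, `zeroWeight x` is the order of the group divided by the order of `x`. -/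
noncomputable def zeroWeight {G : Type*} [AddCommGroup G] (x : G) : ℕ :=
  if x = 0 then Nat.card G else 1

lemma zeroWeight_zero {G : Type*} [AddCommGroup G] : zeroWeight (0 : G) = Nat.card G :=
  if_pos rfl

lemma zeroWeight_of_ne_zero {G : Type*} [AddCommGroup G] {x : G} (hx : x ≠ 0) :
    zeroWeight x = 1 :=
  if_neg hx

lemma sum_zeroWeight_of_ne_zero {G : Type*} [AddCommGroup G] {f : ι → G} {s : Finset ι}
    (hf : ∀ i ∈ s, f i ≠ 0) : ∑ i ∈ s, zeroWeight (f i) = #s := by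
  rw [card_eq_sum_ones]
  exact sum_congr rfl fun i hi ↦ zeroWeight_of_ne_zero (hf i hi)

lemma sum_eq_zero_of_not_sumsToFst {g : ι → M × N} {X : Finset ι} (hX : ¬SumsToFst g X)
    (h : ∑ i ∈ X, (g i).2 = 0) : ∑ i ∈ X, g i = 0 := by
  rw [Prod.ext_iff, Prod.fst_sum, Prod.snd_sum]
  exact ⟨of_not_not fun hne ↦ hX ⟨hne, h⟩, h⟩

lemma snd_ne_zero_of_forall_not_sumsToFst {g : ι → M × N} {s : Finset ι}
    (hg0 : ∀ i ∈ s, g i ≠ 0) (hs : ∀ X ⊆ s, ¬SumsToFst g X) : ∀ i ∈ s, (g i).2 ≠ 0 := by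
  intro i hi h
  refine hg0 i hi ?_
  simpa using sum_eq_zero_of_not_sumsToFst (hs {i} (singleton_subset_iff.2 hi)) (by simpa using h)

lemma sum_zeroWeight_fst_mul_snd [DecidableEq M] {g : ι → M × N} {s : Finset ι}
    (hg0 : ∀ i ∈ s, g i ≠ 0) :
    ∑ i ∈ s, zeroWeight (g i).1 * zeroWeight (g i).2 =
      Nat.card M * #{i ∈ s | (g i).1 = 0} + ∑ i ∈ s with (g i).1 ≠ 0, zeroWeight (g i).2 := by
  have hsnd : ∀ i ∈ ({i ∈ s | (g i).1 = 0} : Finset ι), (g i).2 ≠ 0 := fun i hi h ↦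
    hg0 i (mem_filter.1 hi).1 (Prod.ext (mem_filter.1 hi).2 h)
  rw [← sum_filter_add_sum_filter_not s fun i ↦ (g i).1 = 0, ← sum_zeroWeight_of_ne_zero hsnd,
    mul_sum]
  congr 1 <;> refine sum_congr rfl fun i hi ↦ ?_
  · rw [(mem_filter.1 hi).2, zeroWeight_zero]
  · rw [zeroWeight_of_ne_zero (mem_filter.1 hi).2, one_mul]

variable [DecidableEq ι]

lemma ZeroSumInterClosed.card_le_natCard_fst [Finite M] {g : ι → M × N} {s : Finset ι}
    (hg : ZeroSumInterClosed g s) {T : Finset (Finset ι)} (hTs : ∀ X ∈ T, X ⊆ s)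
    (hT : (T : Set (Finset ι)).PairwiseDisjoint id) (hTg : ∀ X ∈ T, SumsToFst g X) :
    #T ≤ Nat.card M := by
  have hfst : ZeroSumInterClosed (fun X ↦ ∑ i ∈ X, (g i).1) T := by
    refine (zeroSumInterClosed_congr fun U hU ↦ ?_).1 (hg.sum_of_pairwiseDisjoint hTs hT)
    have hsnd : ∑ X ∈ U, ∑ i ∈ X, (g i).2 = 0 := sum_eq_zero fun X hX ↦ (hTg X (hU hX)).2
    simp only [Prod.ext_iff, Prod.fst_sum, Prod.snd_sum, Prod.fst_zero, Prod.snd_zero, hsnd,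
      and_true]
  exact hfst.card_le_natCard fun X hX ↦ (hTg X hX).1

lemma ZeroSumInterClosed.not_sumsToFst_of_disjoint [Finite M] {g : ι → M × N} {s : Finset ι}
    (hg : ZeroSumInterClosed g s) {T : Finset (Finset ι)} (hTs : ∀ X ∈ T, X ⊆ s)
    (hT : (T : Set (Finset ι)).PairwiseDisjoint id) (hTg : ∀ X ∈ T, SumsToFst g X)
    (hcard : Nat.card M ≤ #T) {X : Finset ι} (hX : X ⊆ s) (hXT : Disjoint X (T.biUnion id)) :
    ¬SumsToFst g X := by
  intro hXg
  have hXne : X.Nonempty := nonempty_of_sum_ne_zero hXg.1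
  have hins := hg.card_le_natCard_fst ((forall_mem_insert ..).2 ⟨hX, hTs⟩)
    (coe_insert X T ▸ pairwiseDisjoint_insert_of_disjoint_biUnion hT hXT)
    ((forall_mem_insert ..).2 ⟨hXg, hTg⟩)
  rw [card_insert_of_notMem (notMem_of_disjoint_biUnion hXne hXT)] at hins
  omega

lemma ZeroSumInterClosed.card_le_natCard_snd [Finite N] {g : ι → M × N} {s : Finset ι}
    (hg : ZeroSumInterClosed g s) (hg0 : ∀ i ∈ s, g i ≠ 0) (hs : ∀ X ⊆ s, ¬SumsToFst g X) :
    #s ≤ Nat.card N := by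
  have hsnd : ZeroSumInterClosed (fun i ↦ (g i).2) s :=
    (zeroSumInterClosed_congr fun X hX ↦
      ⟨fun h ↦ by rw [← Prod.snd_sum, h, Prod.snd_zero],
        sum_eq_zero_of_not_sumsToFst (hs X hX)⟩).1 hg
  exact hsnd.card_le_natCard (snd_ne_zero_of_forall_not_sumsToFst hg0 hs)

lemma ZeroSumInterClosed.snd_of_minimal {g : ι → M × N} {X : Finset ι}
    (hg : ZeroSumInterClosed g X) (hX : Minimal (SumsToFst g) X) :
    ZeroSumInterClosed (fun i ↦ (g i).2) X := by
  intro I hI J hJ hI0 hJ0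
  obtain rfl | hIX := eq_or_ne I X
  · rwa [inter_eq_right.2 hJ]
  obtain rfl | hJX := eq_or_ne J X
  · rwa [inter_eq_left.2 hI]
  have hzero {K : Finset ι} (hK : K ⊆ X) (hKX : K ≠ X) (h : ∑ i ∈ K, (g i).2 = 0) :
      ∑ i ∈ K, g i = 0 :=
    sum_eq_zero_of_not_sumsToFst (hX.not_prop_of_lt (hK.ssubset_of_ne hKX)) h
  rw [← Prod.snd_sum, hg hI hJ (hzero hI hIX hI0) (hzero hJ hJX hJ0), Prod.snd_zero]

lemma ZeroSumInterClosed.sum_zeroWeight_snd_le_of_minimal [Finite N] {g : ι → M × N}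
    {X : Finset ι} (hg : ZeroSumInterClosed g X) (hX : Minimal (SumsToFst g) X)
    (hX0 : ∀ i ∈ X, (g i).1 ≠ 0) : ∑ i ∈ X, zeroWeight (g i).2 ≤ Nat.card N := by
  by_cases hsnd : ∀ i ∈ X, (g i).2 ≠ 0
  · exact (sum_zeroWeight_of_ne_zero hsnd).trans_le ((hg.snd_of_minimal hX).card_le_natCard hsnd)
  push Not at hsnd
  obtain ⟨i, hi, hi0⟩ := hsnd
  have hsingle : SumsToFst g {i} := by simpa [SumsToFst] using ⟨hX0 i hi, hi0⟩
  obtain rfl : {i} = X := hX.eq_of_le hsingle (singleton_subset_iff.2 hi)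
  simp [hi0, zeroWeight_zero]

lemma ZeroSumInterClosed.sum_zeroWeight_snd_le [Finite N] {g : ι → M × N} {D : Finset ι}
    (hg : ZeroSumInterClosed g D) (hD0 : ∀ i ∈ D, (g i).1 ≠ 0) {T : Finset (Finset ι)}
    (hTmin : ∀ X ∈ T, X ⊆ D ∧ Minimal (SumsToFst g) X)
    (hT : (T : Set (Finset ι)).PairwiseDisjoint id)
    (hTmax : ∀ X ⊆ D \ T.biUnion id, ¬SumsToFst g X) :
    ∑ i ∈ D, zeroWeight (g i).2 ≤ #T * Nat.card N + #(D \ T.biUnion id) := by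
  rw [← sum_sdiff (biUnion_subset.2 fun X hX ↦ (hTmin X hX).1), add_comm]
  refine add_le_add ?_ (sum_zeroWeight_of_ne_zero <| snd_ne_zero_of_forall_not_sumsToFst
    (fun i hi h ↦ hD0 i (sdiff_subset hi) (by rw [h, Prod.fst_zero])) hTmax).le
  exact (sum_biUnion hT).trans_le <| sum_le_card_nsmul _ _ _ fun X hX ↦
    (hg.mono (hTmin X hX).1).sum_zeroWeight_snd_le_of_minimal (hTmin X hX).2
      fun i hi ↦ hD0 i ((hTmin X hX).1 hi)

lemma ZeroSumInterClosed.sum_zeroWeight_snd_add_card_le [Finite M] [Finite N] [DecidableEq M]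
    {g : ι → M × N} {s : Finset ι} (hg : ZeroSumInterClosed g s) (hg0 : ∀ i ∈ s, g i ≠ 0) :
    ∑ i ∈ s with (g i).1 ≠ 0, zeroWeight (g i).2 + #{i ∈ s | (g i).1 = 0} ≤
      (Nat.card M + 1) * Nat.card N := by
  set B := {i ∈ s | (g i).1 = 0}
  set D := {i ∈ s | (g i).1 ≠ 0}
  have hDs : D ⊆ s := filter_subset ..
  have hBs : B ⊆ s := filter_subset ..
  have hBD : Disjoint B D := disjoint_filter_filter_not ..
  obtain ⟨T, hTmin, hTdisj, hTmax⟩ := exists_pairwiseDisjoint_minimal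
    (P := SumsToFst g) (by simp [SumsToFst]) D
  have hTs : ∀ X ∈ T, X ⊆ s := fun X hX ↦ (hTmin X hX).1.trans hDs
  have hTg : ∀ X ∈ T, SumsToFst g X := fun X hX ↦ (hTmin X hX).2.prop
  have hsumD := (hg.mono hDs).sum_zeroWeight_snd_le (fun i hi ↦ (mem_filter.1 hi).2)
    hTmin hTdisj hTmax
  set U := T.biUnion id
  set R := D \ U
  have hUD : U ⊆ D := biUnion_subset.2 fun X hX ↦ (hTmin X hX).1
  have hRs : R ⊆ s := sdiff_subset.trans hDs
  have hbound {V : Finset ι} (hV : V ⊆ s) (hVg : ∀ X ⊆ V, ¬SumsToFst g X) : #V ≤ Nat.card N :=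
    (hg.mono hV).card_le_natCard_snd (fun i hi ↦ hg0 i (hV hi)) hVg
  obtain hT | hT := (hg.card_le_natCard_fst hTs hTdisj hTg).lt_or_eq
  · have hcardR := hbound hRs hTmax
    have hcardB := hbound hBs fun X hX hXg ↦
      hXg.1 (sum_eq_zero fun i hi ↦ (mem_filter.1 (hX hi)).2)
    nlinarith
  · have hRB : Disjoint R B := disjoint_of_subset_left sdiff_subset hBD.symm
    have hRBU : Disjoint (R ∪ B) U :=
      disjoint_union_left.2 ⟨sdiff_disjoint, disjoint_of_subset_right hUD hBD⟩
    have hcard := hbound (union_subset hRs hBs) fun X hX ↦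
      hg.not_sumsToFst_of_disjoint hTs hTdisj hTg hT.ge (hX.trans (union_subset hRs hBs))
        (disjoint_of_subset_left hX hRBU)
    rw [card_union_of_disjoint hRB] at hcard
    nlinarith

lemma ZeroSumInterClosed.card_filter_fst_eq_zero_le [Finite N] [DecidableEq M] {g : ι → M × N}
    {s : Finset ι} (hg : ZeroSumInterClosed g s) (hg0 : ∀ i ∈ s, g i ≠ 0) :
    #{i ∈ s | (g i).1 = 0} ≤ Nat.card N :=
  (hg.mono (filter_subset ..)).card_le_natCard_snd (fun i hi ↦ hg0 i (mem_filter.1 hi).1)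
    fun _ hX hXg ↦ hXg.1 (sum_eq_zero fun _ hi ↦ (mem_filter.1 (hX hi)).2)

lemma ZeroSumInterClosed.sum_zeroWeight_le [Finite M] [Finite N] {g : ι → M × N} {s : Finset ι}
    (hg : ZeroSumInterClosed g s) (hg0 : ∀ i ∈ s, g i ≠ 0) :
    ∑ i ∈ s, zeroWeight (g i).1 * zeroWeight (g i).2 ≤ 2 * (Nat.card M * Nat.card N) := by
  classical
  have hsum := sum_zeroWeight_fst_mul_snd hg0
  have hcore := hg.sum_zeroWeight_snd_add_card_le hg0
  have hcard := hg.card_filter_fst_eq_zero_le hg0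
  have hM : 1 ≤ Nat.card M := Nat.card_pos
  nlinarith

lemma ZeroSumInterClosed.card_filter_fst_eq_zero [Finite M] [Nontrivial M] [Finite N]
    [DecidableEq M] {g : ι → M × N} {s : Finset ι} (hg : ZeroSumInterClosed g s)
    (hg0 : ∀ i ∈ s, g i ≠ 0)
    (heq : ∑ i ∈ s, zeroWeight (g i).1 * zeroWeight (g i).2 = 2 * (Nat.card M * Nat.card N)) :
    #{i ∈ s | (g i).1 = 0} = Nat.card N := by
  have hsum := sum_zeroWeight_fst_mul_snd hg0
  have hcore := hg.sum_zeroWeight_snd_add_card_le hg0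
  have hcard := hg.card_filter_fst_eq_zero_le hg0
  have hM : 1 < Nat.card M := Finite.one_lt_card
  nlinarith

lemma ZeroSumInterClosed.card_filter_snd_eq_zero [Finite M] [Finite N] [Nontrivial N]
    [DecidableEq N] {g : ι → M × N} {s : Finset ι} (hg : ZeroSumInterClosed g s)
    (hg0 : ∀ i ∈ s, g i ≠ 0)
    (heq : ∑ i ∈ s, zeroWeight (g i).1 * zeroWeight (g i).2 = 2 * (Nat.card M * Nat.card N)) :
    #{i ∈ s | (g i).2 = 0} = Nat.card M := by
  let e : M × N ≃+ N × M := AddEquiv.prodComm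
  refine ((zeroSumInterClosed_comp_iff e e.injective).2 hg).card_filter_fst_eq_zero ?_ ?_
  · exact fun i hi ↦ e.map_ne_zero_iff.2 (hg0 i hi)
  · simpa [e, mul_comm] using heq

lemma ZeroSumInterClosed.fst_eq_zero_or_snd_eq_zero [Finite M] [Nontrivial M] [Finite N]
    [Nontrivial N] {g : ι → M × N} {s : Finset ι} (hg : ZeroSumInterClosed g s)
    (hg0 : ∀ i ∈ s, g i ≠ 0)
    (heq : ∑ i ∈ s, zeroWeight (g i).1 * zeroWeight (g i).2 = 2 * (Nat.card M * Nat.card N)) :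
    ∀ i ∈ s, (g i).1 = 0 ∨ (g i).2 = 0 := by
  classical
  by_contra! hmixed
  obtain ⟨i, his, hi⟩ := hmixed
  have hfst := hg.card_filter_fst_eq_zero hg0 heq
  have hsnd := hg.card_filter_snd_eq_zero hg0 heq
  have hsub : insert i {i ∈ s | (g i).2 = 0} ⊆ {i ∈ s | (g i).1 ≠ 0} := by
    refine insert_subset (mem_filter.2 ⟨his, hi.1⟩) fun j hj ↦ ?_
    obtain ⟨hjs, hj⟩ := mem_filter.1 hj
    exact mem_filter.2 ⟨hjs, fun h ↦ hg0 j hjs (Prod.ext h hj)⟩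
  have hsum : ∑ j ∈ insert i {i ∈ s | (g i).2 = 0}, zeroWeight (g j).2 =
      1 + Nat.card M * Nat.card N := by
    rw [sum_insert (by simp [hi.2]), zeroWeight_of_ne_zero hi.2, ← hsnd, ← smul_eq_mul,
      sum_eq_card_nsmul fun j hj ↦ ?_]
    rw [(mem_filter.1 hj).2, zeroWeight_zero]
  have hle := sum_le_sum_of_subset (f := fun j ↦ zeroWeight (g j).2) hsub
  rw [sum_zeroWeight_fst_mul_snd hg0, hfst] at heq
  omega

end Prod

section UFIM

variable {G H : Type*} [AddCommGroup G] [AddCommGroup H] {ℓ : ℕ} {g : Fin ℓ → G}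

lemma isMinZeroSum_iff_minimal {I : Finset (Fin ℓ)} :
    IsMinZeroSum g I ↔ Minimal (fun I ↦ I.Nonempty ∧ ∑ i ∈ I, g i = 0) I := by
  rw [minimal_iff_forall_lt, IsMinZeroSum, and_assoc]
  simp only [not_and, ne_eq]

lemma exists_finpartition_isMinZeroSum {s : Finset (Fin ℓ)} (hs : ∑ i ∈ s, g i = 0) :
    ∃ P : Finpartition s, ∀ I ∈ P.parts, IsMinZeroSum g I := by
  induction s using Finset.strongInduction with | H s ih =>
  obtain rfl | hne := s.eq_empty_or_nonempty
  · exact ⟨Finpartition.empty _, fun I hI ↦ absurd hI (notMem_empty I)⟩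
  obtain ⟨I, hIs, hI⟩ := exists_minimal_le_of_wellFoundedLT
    (fun I ↦ I.Nonempty ∧ ∑ i ∈ I, g i = 0) s ⟨hne, hs⟩
  obtain ⟨P, hP⟩ := ih (s \ I) (sdiff_ssubset hIs hI.prop.1)
    (by rw [sum_sdiff_eq_sub hIs, hs, hI.prop.2, sub_zero])
  exact ⟨P.extend hI.prop.1.ne_empty sdiff_disjoint (sdiff_union_of_subset hIs),
    (forall_mem_insert ..).2 ⟨isMinZeroSum_iff_minimal.2 hI, hP⟩⟩

lemma exists_isFactorization_le {Q : Finpartition (univ : Finset (Fin ℓ))}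
    (hQ : ∀ J ∈ Q.parts, ∑ i ∈ J, g i = 0) : ∃ P ≤ Q, IsFactorization g P := by
  choose R hR using fun J hJ ↦ exists_finpartition_isMinZeroSum (hQ J hJ)
  refine ⟨Q.bind R, fun I hI ↦ ?_, fun I hI ↦ ?_⟩ <;>
    obtain ⟨J, hJ, hIJ⟩ := Finpartition.mem_bind.1 hI
  · exact ⟨J, hJ, (R J hJ).le hIJ⟩
  · exact hR J hJ I hIJ

lemma IsFactorization.sum_eq_zero {P : Finpartition (univ : Finset (Fin ℓ))}
    (hP : IsFactorization g P) {J : Finset (Fin ℓ)}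
    (hJ : ∀ I ∈ P.parts, I ⊆ J ∨ Disjoint I J) : ∑ i ∈ J, g i = 0 := by
  rw [← univ_inter J, ← P.biUnion_parts, biUnion_inter,
    sum_biUnion (P.disjoint.mono fun _ ↦ inter_subset_left)]
  refine Finset.sum_eq_zero fun I hI ↦ ?_
  obtain h | h := hJ I hI
  · rw [id, inter_eq_left.2 h, (hP I hI).2.1]
  · rw [id, disjoint_iff_inter_eq_empty.1 h, sum_empty]

lemma IsUFIM.sum_eq_zero (hg : IsUFIM g) : ∑ i, g i = 0 := by
  obtain ⟨-, P, hP, -⟩ := hg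
  exact hP.sum_eq_zero fun I _ ↦ .inl (subset_univ I)

lemma IsUFIM.zeroSumInterClosed (hg : IsUFIM g) : ZeroSumInterClosed g univ := by
  have hsum := hg.sum_eq_zero
  obtain ⟨-, P, hP, huniq⟩ := hg
  have hsplit {J : Finset (Fin ℓ)} (hJ : ∑ i ∈ J, g i = 0) :
      ∀ I ∈ P.parts, I ⊆ J ∨ Disjoint I J := by
    let Q : Finpartition (univ : Finset (Fin ℓ)) :=
      (⊤ : Finpartition J).extendOfLE (subset_univ J)
    have hQ : ∀ K ∈ Q.parts, K = J ∨ K = univ \ J := fun K hK ↦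
      (Finpartition.mem_parts_or_eq_sdiff_of_mem_extendOfLE _ _ hK).imp_left fun h ↦
        mem_singleton.1 (Finpartition.parts_top_subset J h)
    obtain ⟨P', hPQ, hP'⟩ := exists_isFactorization_le (g := g) (Q := Q) fun K hK ↦ by
      obtain rfl | rfl := hQ K hK
      · exact hJ
      · rw [sum_sdiff_eq_sub (subset_univ J), hsum, hJ, sub_zero]
    obtain rfl := huniq P' hP'
    intro I hI
    obtain ⟨K, hK, hIK⟩ := hPQ hI
    obtain rfl | rfl := hQ K hK
    · exact .inl hIK
    · exact .inr (disjoint_of_subset_left hIK sdiff_disjoint)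
  exact fun I _ J _ hI hJ ↦ hP.sum_eq_zero fun K hK ↦ by
    obtain hKI | hKI := hsplit hI K hK
    · exact (hsplit hJ K hK).imp (subset_inter hKI) (disjoint_of_subset_right inter_subset_right)
    · exact .inr (disjoint_of_subset_right inter_subset_left hKI)

lemma IsFactorization.eq_of_zeroSumInterClosed (hg : ZeroSumInterClosed g univ)
    {P Q : Finpartition (univ : Finset (Fin ℓ))} (hP : IsFactorization g P)
    (hQ : IsFactorization g Q) : P = Q := by
  have hinter {I J : Finset (Fin ℓ)} (hI : IsMinZeroSum g I) (hJ : IsMinZeroSum g J)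
      (hIJ : (I ∩ J).Nonempty) : I ⊆ J :=
    inter_eq_left.1 <| (isMinZeroSum_iff_minimal.1 hI).eq_of_le
      ⟨hIJ, hg (subset_univ I) (subset_univ J) hI.2.1 hJ.2.1⟩ inter_subset_left
  have hsub {P Q : Finpartition (univ : Finset (Fin ℓ))} (hP : IsFactorization g P)
      (hQ : IsFactorization g Q) : P ≤ Q := fun I hI ↦ by
    obtain ⟨i, hi⟩ := P.nonempty_of_mem_parts hI
    obtain ⟨J, hJ, hiJ⟩ := Q.exists_mem (mem_univ i)
    exact ⟨J, hJ, hinter (hP I hI) (hQ J hJ) ⟨i, mem_inter.2 ⟨hi, hiJ⟩⟩⟩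
  exact (hsub hP hQ).antisymm (hsub hQ hP)

lemma isUFIM_iff :
    IsUFIM g ↔ (∀ i, g i ≠ 0) ∧ ∑ i, g i = 0 ∧ ZeroSumInterClosed g univ := by
  refine ⟨fun hg ↦ ⟨hg.1, hg.sum_eq_zero, hg.zeroSumInterClosed⟩, fun ⟨hg0, hsum, hg⟩ ↦ ?_⟩
  obtain ⟨P, hP⟩ := exists_finpartition_isMinZeroSum hsum
  exact ⟨hg0, P, hP, fun Q hQ ↦ IsFactorization.eq_of_zeroSumInterClosed hg hQ hP⟩

lemma isUFIM_comp_iff {F : Type*} [FunLike F G H] [AddMonoidHomClass F G H] (f : F)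
    (hf : Function.Injective f) : IsUFIM (f ∘ g) ↔ IsUFIM g := by
  simp only [isUFIM_iff, zeroSumInterClosed_comp_iff f hf, Function.comp_apply, ← map_sum, ne_eq,
    map_eq_zero_iff f hf]

lemma crossNum_comp {F : Type*} [FunLike F G H] [AddMonoidHomClass F G H] (f : F)
    (hf : Function.Injective f) : crossNum (f ∘ g) = crossNum g :=
  sum_congr rfl fun i _ ↦ by
    rw [Function.comp_apply, ← addOrderOf_injective (f : G →+ H) hf (g i), AddMonoidHom.coe_coe]

lemma K1_congr (e : G ≃+ H) : K1 G = K1 H := by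
  refine congrArg sSup (Set.ext fun x ↦ ⟨?_, ?_⟩) <;> rintro ⟨ℓ, g, hg, rfl⟩
  · exact ⟨ℓ, e ∘ g, (isUFIM_comp_iff e e.injective).2 hg, crossNum_comp e e.injective⟩
  · exact ⟨ℓ, e.symm ∘ g, (isUFIM_comp_iff e.symm e.symm.injective).2 hg,
      crossNum_comp e.symm e.symm.injective⟩

lemma IsUFIM.exists_isUFIM_of_sum_eq_zero (hg : IsUFIM g) {s : Finset (Fin ℓ)}
    (hs : ∑ i ∈ s, g i = 0) :
    ∃ f : Fin #s → G, IsUFIM f ∧ Multiset.map f univ.val = Multiset.map g s.val := by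
  let e : Fin #s ↪ Fin ℓ := (s.orderEmbOfFin rfl).toEmbedding
  have he : univ.map e = s := map_orderEmbOfFin_univ s rfl
  have hsum (I : Finset (Fin #s)) : ∑ i ∈ I, (g ∘ e) i = ∑ i ∈ I.map e, g i :=
    (sum_map I e g).symm
  refine ⟨g ∘ e, isUFIM_iff.2 ⟨fun i ↦ hg.1 _, by rw [hsum, he, hs], fun I _ J _ hI hJ ↦ ?_⟩, ?_⟩
  · rw [hsum] at hI hJ ⊢
    rw [map_inter]
    exact hg.zeroSumInterClosed (subset_univ _) (subset_univ _) hI hJ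
  · conv_rhs => rw [← he, map_val, Multiset.map_map]

lemma isUFIM_const {x : G} (hx : x ≠ 0) : IsUFIM fun _ : Fin (addOrderOf x) ↦ x := by
  have hcases {I : Finset (Fin (addOrderOf x))} (hI : ∑ _i ∈ I, x = 0) : I = ∅ ∨ I = univ := by
    rw [sum_const, ← addOrderOf_dvd_iff_nsmul_eq_zero] at hI
    refine or_iff_not_imp_right.2 fun hne ↦ card_eq_zero.1 (Nat.eq_zero_of_dvd_of_lt hI ?_)
    exact (card_lt_card (ssubset_univ_iff.2 hne)).trans_eq (card_fin _)
  refine isUFIM_iff.2 ⟨fun _ ↦ hx, by simp [addOrderOf_nsmul_eq_zero], fun I _ J _ hI hJ ↦ ?_⟩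
  obtain rfl | rfl := hcases hI
  · simp
  · rwa [univ_inter]

lemma crossNum_const {x : G} (hx : IsOfFinAddOrder x) :
    crossNum (fun _ : Fin (addOrderOf x) ↦ x) = 1 := by
  have hpos : (addOrderOf x : ℝ) ≠ 0 := mod_cast hx.addOrderOf_pos.ne'
  simp [crossNum, hpos]

end UFIM

section Append

variable {M N : Type*} [AddCommGroup M] [AddCommGroup N] {a b : ℕ} {f : Fin a → M} {h : Fin b → N}

/-- The union of a family in `M` and a family in `N`, as a family in `M × N`. -/
def prodAppend (f : Fin a → M) (h : Fin b → N) : Fin (a + b) → M × N :=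
  Fin.append (fun i ↦ (f i, 0)) fun j ↦ (0, h j)

lemma sum_prodAppend (I : Finset (Fin (a + b))) :
    ∑ k ∈ I, prodAppend f h k =
      (∑ i with Fin.castAdd b i ∈ I, f i, ∑ j with Fin.natAdd a j ∈ I, h j) := by
  rw [← univ_inter I, ← sum_ite_mem, Fin.sum_univ_add]
  simp [prodAppend, ← sum_filter, Prod.ext_iff, Prod.fst_sum, Prod.snd_sum]

lemma IsUFIM.prodAppend (hf : IsUFIM f) (hh : IsUFIM h) : IsUFIM (prodAppend f h) := by
  refine isUFIM_iff.2 ⟨?_, ?_, fun I _ J _ hI hJ ↦ ?_⟩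
  · rw [Fin.forall_fin_add]
    simpa [_root_.prodAppend, Prod.ext_iff] using ⟨hf.1, hh.1⟩
  · simp [sum_prodAppend, hf.sum_eq_zero, hh.sum_eq_zero]
  · rw [sum_prodAppend, Prod.mk_eq_zero] at hI hJ ⊢
    simp only [mem_inter, filter_and]
    exact ⟨hf.zeroSumInterClosed (subset_univ _) (subset_univ _) hI.1 hJ.1,
      hh.zeroSumInterClosed (subset_univ _) (subset_univ _) hI.2 hJ.2⟩

lemma crossNum_prodAppend : crossNum (prodAppend f h) = crossNum f + crossNum h := by
  simp [crossNum, Fin.sum_univ_add, prodAppend, Prod.addOrderOf]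

end Append

section AddOrderOf

variable {ι G M N : Type*} [AddCommGroup G] [AddCommGroup M] [AddCommGroup N]

lemma sum_filter_addOrderOf_eq_zero {g : ι → G} {s : Finset ι} {m n : ℕ} (hmn : m.Coprime n)
    (hg : ∀ i ∈ s, addOrderOf (g i) = m ∨ addOrderOf (g i) = n) (hs : ∑ i ∈ s, g i = 0) :
    ∑ i ∈ s with addOrderOf (g i) = m, g i = 0 := by
  set σ := ∑ i ∈ s with addOrderOf (g i) = m, g i
  have hsplit : σ + ∑ i ∈ s with ¬addOrderOf (g i) = m, g i = 0 := by
    rw [sum_filter_add_sum_filter_not, hs]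
  have hm : m • σ = 0 := by
    rw [smul_sum]
    exact sum_eq_zero fun i hi ↦ (mem_filter.1 hi).2 ▸ addOrderOf_nsmul_eq_zero (g i)
  have hn : n • σ = 0 := by
    rw [eq_neg_of_add_eq_zero_left hsplit, smul_neg, smul_sum, neg_eq_zero]
    refine sum_eq_zero fun i hi ↦ ?_
    obtain ⟨his, hi⟩ := mem_filter.1 hi
    exact (hg i his).resolve_left hi ▸ addOrderOf_nsmul_eq_zero (g i)
  exact AddMonoid.addOrderOf_eq_one_iff.1 (Nat.eq_one_of_dvd_coprimes hmn
    (addOrderOf_dvd_of_nsmul_eq_zero hm) (addOrderOf_dvd_of_nsmul_eq_zero hn))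

lemma addOrderOf_eq_natCard_of_ne_zero (hG : (Nat.card G).Prime) {x : G} (hx : x ≠ 0) :
    addOrderOf x = Nat.card G :=
  (hG.eq_one_or_self_of_dvd _ (addOrderOf_dvd_natCard x)).resolve_left fun h ↦
    hx (AddMonoid.addOrderOf_eq_one_iff.1 h)

lemma addOrderOf_mul_zeroWeight (hG : (Nat.card G).Prime) (x : G) :
    addOrderOf x * zeroWeight x = Nat.card G := by
  obtain rfl | hx := eq_or_ne x 0
  · rw [addOrderOf_zero, zeroWeight_zero, one_mul]
  · rw [zeroWeight_of_ne_zero hx, addOrderOf_eq_natCard_of_ne_zero hG hx, mul_one]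

lemma addOrderOf_prod_of_coprime (hMN : (Nat.card M).Coprime (Nat.card N)) (x : M × N) :
    addOrderOf x = addOrderOf x.1 * addOrderOf x.2 := by
  rw [Prod.addOrderOf]
  exact (hMN.of_dvd (addOrderOf_dvd_natCard x.1) (addOrderOf_dvd_natCard x.2)).lcm_eq_mul

lemma addOrderOf_eq_natCard_fst_iff (hM : (Nat.card M).Prime)
    (hMN : (Nat.card M).Coprime (Nat.card N)) {x : M × N} (hx : x ≠ 0) :
    addOrderOf x = Nat.card M ↔ x.2 = 0 := by
  rw [addOrderOf_prod_of_coprime hMN]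
  refine ⟨fun h ↦ AddMonoid.addOrderOf_eq_one_iff.1 <|
    Nat.eq_one_of_dvd_coprimes hMN (h ▸ dvd_mul_left ..) (addOrderOf_dvd_natCard x.2), fun h ↦ ?_⟩
  have hx1 : x.1 ≠ 0 := fun h' ↦ hx (Prod.ext h' h)
  rw [h, addOrderOf_zero, mul_one, addOrderOf_eq_natCard_of_ne_zero hM hx1]

lemma addOrderOf_eq_natCard_snd_iff (hN : (Nat.card N).Prime)
    (hMN : (Nat.card M).Coprime (Nat.card N)) {x : M × N} (hx : x ≠ 0) :
    addOrderOf x = Nat.card N ↔ x.1 = 0 := by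
  let e : M × N ≃+ N × M := AddEquiv.prodComm
  rw [← e.addOrderOf_eq x]
  exact addOrderOf_eq_natCard_fst_iff hN hMN.symm (e.map_ne_zero_iff.2 hx)

end AddOrderOf

section Extremal

variable {M N : Type*} [AddCommGroup M] [AddCommGroup N]

lemma crossNum_eq_sum_zeroWeight_div {ℓ : ℕ} {g : Fin ℓ → M × N} (hM : (Nat.card M).Prime)
    (hN : (Nat.card N).Prime) (hMN : (Nat.card M).Coprime (Nat.card N)) :
    crossNum g = (∑ i, zeroWeight (g i).1 * zeroWeight (g i).2 : ℕ) /
      (Nat.card M * Nat.card N : ℕ) := by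
  rw [crossNum, Nat.cast_sum, sum_div]
  refine sum_congr rfl fun i _ ↦ ?_
  have hmul : addOrderOf (g i) * (zeroWeight (g i).1 * zeroWeight (g i).2) =
      Nat.card M * Nat.card N := by
    rw [addOrderOf_prod_of_coprime hMN, mul_mul_mul_comm, addOrderOf_mul_zeroWeight hM,
      addOrderOf_mul_zeroWeight hN]
  have hpos : Nat.card M * Nat.card N ≠ 0 := mul_ne_zero hM.ne_zero hN.ne_zero
  have hord : (addOrderOf (g i) : ℝ) ≠ 0 := mod_cast left_ne_zero_of_mul (hmul ▸ hpos)
  rw [div_eq_div_iff hord (mod_cast hpos), one_mul]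
  exact_mod_cast hmul.symm.trans (mul_comm ..)

lemma IsUFIM.crossNum_le_two {ℓ : ℕ} {g : Fin ℓ → M × N} (hM : (Nat.card M).Prime)
    (hN : (Nat.card N).Prime) (hMN : (Nat.card M).Coprime (Nat.card N)) (hg : IsUFIM g) :
    crossNum g ≤ 2 := by
  have := Nat.finite_of_card_ne_zero hM.ne_zero
  have := Nat.finite_of_card_ne_zero hN.ne_zero
  have hsum := hg.zeroSumInterClosed.sum_zeroWeight_le fun i _ ↦ hg.1 i
  rw [crossNum_eq_sum_zeroWeight_div hM hN hMN]
  exact div_le_of_le_mul₀ (Nat.cast_nonneg _) zero_le_two (mod_cast hsum)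

lemma exists_isUFIM_crossNum_eq_two [Finite M] [Nontrivial M] [Finite N] [Nontrivial N] :
    ∃ (ℓ : ℕ) (g : Fin ℓ → M × N), IsUFIM g ∧ crossNum g = 2 := by
  obtain ⟨x, hx⟩ := exists_ne (0 : M)
  obtain ⟨y, hy⟩ := exists_ne (0 : N)
  refine ⟨_, _, (isUFIM_const hx).prodAppend (isUFIM_const hy), ?_⟩
  rw [crossNum_prodAppend, crossNum_const (isOfFinAddOrder_of_finite x),
    crossNum_const (isOfFinAddOrder_of_finite y), one_add_one_eq_two]

lemma K1_prod (hM : (Nat.card M).Prime) (hN : (Nat.card N).Prime)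
    (hMN : (Nat.card M).Coprime (Nat.card N)) : K1 (M × N) = 2 := by
  have := Nat.finite_of_card_ne_zero hM.ne_zero
  have := Nat.finite_of_card_ne_zero hN.ne_zero
  have := Finite.one_lt_card_iff_nontrivial.1 hM.one_lt
  have := Finite.one_lt_card_iff_nontrivial.1 hN.one_lt
  refine IsGreatest.csSup_eq ⟨exists_isUFIM_crossNum_eq_two, ?_⟩
  rintro _ ⟨ℓ, g, hg, rfl⟩
  exact hg.crossNum_le_two hM hN hMN

lemma IsUFIM.addOrderOf_of_crossNum_eq_two {ℓ : ℕ} {g : Fin ℓ → M × N} (hM : (Nat.card M).Prime)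
    (hN : (Nat.card N).Prime) (hMN : (Nat.card M).Coprime (Nat.card N)) (hg : IsUFIM g)
    (hk : crossNum g = 2) :
    (∀ i, addOrderOf (g i) = Nat.card M ∨ addOrderOf (g i) = Nat.card N) ∧
      #{i | addOrderOf (g i) = Nat.card M} = Nat.card M ∧
      #{i | addOrderOf (g i) = Nat.card N} = Nat.card N := by
  classical
  have := Nat.finite_of_card_ne_zero hM.ne_zero
  have := Nat.finite_of_card_ne_zero hN.ne_zero
  have := Finite.one_lt_card_iff_nontrivial.1 hM.one_lt
  have := Finite.one_lt_card_iff_nontrivial.1 hN.one_lt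
  have hpos : (Nat.card M * Nat.card N : ℕ) ≠ (0 : ℝ) :=
    mod_cast mul_ne_zero hM.ne_zero hN.ne_zero
  have heq : ∑ i, zeroWeight (g i).1 * zeroWeight (g i).2 = 2 * (Nat.card M * Nat.card N) := by
    rw [crossNum_eq_sum_zeroWeight_div hM hN hMN, div_eq_iff hpos] at hk
    exact_mod_cast hk
  have hg0 : ∀ i ∈ univ, g i ≠ 0 := fun i _ ↦ hg.1 i
  simp only [addOrderOf_eq_natCard_fst_iff hM hMN (hg.1 _),
    addOrderOf_eq_natCard_snd_iff hN hMN (hg.1 _)]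
  exact ⟨fun i ↦ (hg.zeroSumInterClosed.fst_eq_zero_or_snd_eq_zero hg0 heq i (mem_univ i)).symm,
    hg.zeroSumInterClosed.card_filter_snd_eq_zero hg0 heq,
    hg.zeroSumInterClosed.card_filter_fst_eq_zero hg0 heq⟩

end Extremal

section Split

variable {G : Type*} [AddCommGroup G] {ℓ : ℕ} {g : Fin ℓ → G}

lemma IsUFIM.exists_isUFIM_filter (hg : IsUFIM g) {P : G → Prop} [DecidablePred P]
    (hP : ∑ i with P (g i), g i = 0) :
    ∃ (a : ℕ) (f : Fin a → G), (∀ i, P (f i)) ∧ IsUFIM f ∧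
      (univ.val.map g).filter P = univ.val.map f := by
  obtain ⟨f, hf, hmap⟩ := hg.exists_isUFIM_of_sum_eq_zero hP
  have hfilter : (univ.val.map g).filter P = univ.val.map f := by
    rw [hmap, Multiset.filter_map]
    rfl
  refine ⟨_, f, fun i ↦ ?_, hf, hfilter⟩
  exact Multiset.of_mem_filter (hfilter ▸ Multiset.mem_map_of_mem f (mem_univ i))

lemma IsUFIM.exists_split_addOrderOf (hg : IsUFIM g) {m n : ℕ} (hmn : m.Coprime n)
    (hord : ∀ i, addOrderOf (g i) = m ∨ addOrderOf (g i) = n) :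
    ∃ (a b : ℕ) (f : Fin a → G) (h : Fin b → G),
      (∀ i, addOrderOf (f i) = m) ∧ (∀ i, addOrderOf (h i) = n) ∧ IsUFIM f ∧ IsUFIM h ∧
      univ.val.map g = univ.val.map f + univ.val.map h := by
  obtain ⟨a, f, hfm, hf, hfg⟩ := hg.exists_isUFIM_filter (P := fun x ↦ addOrderOf x = m) <|
    sum_filter_addOrderOf_eq_zero hmn (fun i _ ↦ hord i) hg.sum_eq_zero
  obtain ⟨b, h, hhn, hh, hhg⟩ := hg.exists_isUFIM_filter (P := fun x ↦ addOrderOf x = n) <|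
    sum_filter_addOrderOf_eq_zero hmn.symm (fun i _ ↦ (hord i).symm) hg.sum_eq_zero
  have hnot : ∀ x ∈ univ.val.map g, addOrderOf x = n ↔ ¬addOrderOf x = m := by
    intro x hx
    obtain ⟨i, -, rfl⟩ := Multiset.mem_map.1 hx
    refine ⟨fun hn hm ↦ hg.1 i (AddMonoid.addOrderOf_eq_one_iff.1 ?_), (hord i).resolve_left⟩
    exact Nat.eq_one_of_dvd_coprimes hmn hm.dvd hn.dvd
  refine ⟨a, b, f, h, hfm, hhn, hf, hh, ?_⟩
  rw [← hfg, ← hhg, Multiset.filter_congr hnot, Multiset.filter_add_not]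

end Split

/-- Remark (maximalstructurepq): let `p ≠ q` be primes and `S` a UFIM over `C_{pq}∖{0}`
with `k(S) = K₁(C_{pq}) = 2`. Then no element of `S` has order `pq`; `S` decomposes as
`S = S_p ⊔ S_q` where `S_p` is a UFIM over the subgroup of order `p` minus `0` (i.e. all
its elements have order `p`) and similarly `S_q`; and `S` contains exactly `p` elements of
order `p` and exactly `q` elements of order `q`. -/
theorem maximal_ufim_structure_pq (p q : ℕ) (hp : p.Prime) (hq : q.Prime) (hpq : p ≠ q)
    {ℓ : ℕ} (g : Fin ℓ → ZMod (p * q)) (hg : IsUFIM g)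
    (hk : crossNum g = K1 (ZMod (p * q))) :
    K1 (ZMod (p * q)) = 2 ∧
    (∀ i, addOrderOf (g i) ≠ p * q) ∧
    (∃ (a b : ℕ) (gp : Fin a → ZMod (p * q)) (gq : Fin b → ZMod (p * q)),
      (∀ i, addOrderOf (gp i) = p) ∧ (∀ i, addOrderOf (gq i) = q) ∧
      IsUFIM gp ∧ IsUFIM gq ∧
      Multiset.map g Finset.univ.val =
        Multiset.map gp Finset.univ.val + Multiset.map gq Finset.univ.val) ∧
    (Finset.univ.filter (fun i => addOrderOf (g i) = p)).card = p ∧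
    (Finset.univ.filter (fun i => addOrderOf (g i) = q)).card = q := by
  have : Fact p.Prime := ⟨hp⟩
  have : Fact q.Prime := ⟨hq⟩
  have hco : p.Coprime q := (Nat.coprime_primes hp hq).2 hpq
  let e : ZMod (p * q) ≃+ ZMod p × ZMod q := (ZMod.chineseRemainder hco).toAddEquiv
  have hK : K1 (ZMod (p * q)) = 2 := by
    rw [K1_congr e, K1_prod] <;> simpa
  have hcross : crossNum (e ∘ g) = 2 := by rw [crossNum_comp e e.injective, hk, hK]
  obtain ⟨hord, hcardp, hcardq⟩ :=
    ((isUFIM_comp_iff e e.injective).2 hg).addOrderOf_of_crossNum_eq_two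
      (by simpa) (by simpa) (by simpa) hcross
  simp only [Function.comp_apply, AddEquiv.addOrderOf_eq, Nat.card_zmod] at hord hcardp hcardq
  refine ⟨hK, fun i hi ↦ ?_, hg.exists_split_addOrderOf hco hord, hcardp, hcardq⟩
  obtain h | h := hord i
  · exact hq.ne_one ((mul_eq_left₀ hp.ne_zero).1 (hi.symm.trans h))
  · exact hp.ne_one ((mul_eq_right₀ hq.ne_zero).1 (hi.symm.trans h))
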